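/- arXiv:2201.10501 — 3 statements merged into one kernel-verified Lean document; each statement's English description precedes it below -/
import Mathlib

section
/- Let 𝒢 be a finite connected simple graph with one fixed ribbon structure and basis (b_0, b_0b_1) used for all facet graphs, and let J(𝒢) be the set of Jaeger trees of all facet graphs of 𝒢. Let {e_1, …, e_r} be a set of directed edges (orientations of edges of 𝒢). Suppose T ∈ J(𝒢) contains e_1, …, e_r and every tail-edge of T belongs to {e_1, …, e_r} (the remaining e_i being head-edges of T). Then no Jaeger tree T′ ∈ J(𝒢) other than possibly T has its set of tail-edges equal to {e_1, …, e_r}. -/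
open scoped Classical Pointwise

namespace SEP

variable {V : Type*} [Fintype V] [DecidableEq V]

/-- The undirected simple graph underlying a set of directed edges. -/
def fromDir (D : Set (V × V)) : SimpleGraph V :=
  SimpleGraph.fromRel (fun u v => (u, v) ∈ D)

/-- A layering of a simple graph `G`: the layer difference along each edge is at most one,
and the edges with layer difference exactly one form a connected spanning subgraph. -/
structure IsLayering (G : SimpleGraph V) (l : V → ℤ) : Prop where
  step : ∀ ⦃u v⦄, G.Adj u v → |l u - l v| ≤ 1
  conn : (SimpleGraph.fromRel fun u v => G.Adj u v ∧ |l u - l v| = 1).Connected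

/-- The facet graph (as a set of directed edges) associated to a layering. -/
def facetDigraph (G : SimpleGraph V) (l : V → ℤ) : Set (V × V) :=
  {p | G.Adj p.1 p.2 ∧ l p.2 - l p.1 = 1}

/-- `D` is a facet graph of `G`. -/
def IsFacetGraph (G : SimpleGraph V) (D : Set (V × V)) : Prop :=
  ∃ l : V → ℤ, IsLayering G l ∧ D = facetDigraph G l

/-- A ribbon structure on `G`: at each vertex a cyclic permutation of the incident edges,
encoded by the "next neighbour" function `ρ`. -/
structure IsRibbon (G : SimpleGraph V) (ρ : V → V → V) : Prop where
  adj : ∀ ⦃x y⦄, G.Adj x y → G.Adj x (ρ x y)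
  cyc : ∀ ⦃x y z⦄, G.Adj x y → G.Adj x z → ∃ k : ℕ, (ρ x)^[k] y = z

/-- One step of the Bernardi tour of the tree with (undirected) edge set `T`:
from the node–edge pair (x, xy) move to (y, yx⁺) if xy is a tree edge
and to (x, xy⁺) otherwise. -/
noncomputable def tourStep (ρ : V → V → V) (T : Set (Sym2 V)) (p : V × V) : V × V :=
  if s(p.1, p.2) ∈ T then (p.2, ρ p.2 p.1) else (p.1, ρ p.1 p.2)

/-- The tour of the tree `T`, starting at the basis `(b0, b0b1)`. -/
noncomputable def tourSeq (ρ : V → V → V) (T : Set (Sym2 V)) (b0 b1 : V) (n : ℕ) : V × V :=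
  (tourStep ρ T)^[n] (b0, b1)

/-- The first time the node–edge pair (x, edge xy) becomes current in the tour of `T`. -/
noncomputable def firstVisit (ρ : V → V → V) (T : Set (Sym2 V)) (b0 b1 x y : V) : ℕ :=
  sInf {n | tourSeq ρ T b0 b1 n = (x, y)}

/-- The undirected edge set of a set of directed edges. -/
def und (T : Set (V × V)) : Set (Sym2 V) := {e | ∃ p ∈ T, e = s(p.1, p.2)}

/-- `T` is a spanning tree of the digraph `D`, recorded with its orientation. -/
def IsSpanningTreeOf (T D : Set (V × V)) : Prop :=
  T ⊆ D ∧ (fromDir T).IsTree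

/-- `T` is a Jaeger tree of the digraph `D` with respect to the ribbon structure `ρ` and the
basis `(b0, b1)`: it is a spanning tree of `D` and every directed edge t→h of `D` not in `T`
is first reached at its tail `t` in the tour of `T`. -/
def IsJaegerTree (ρ : V → V → V) (b0 b1 : V) (D T : Set (V × V)) : Prop :=
  IsSpanningTreeOf T D ∧
    ∀ p ∈ D, s(p.1, p.2) ∉ und T →
      firstVisit ρ (und T) b0 b1 p.1 p.2 < firstVisit ρ (und T) b0 b1 p.2 p.1

/-- The directed edge `p = (t, h)` of `T` is a tail-edge of `T` w.r.t. the base vertex `b0`: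
`b0` and `t` lie in the same component of `T - th`. -/
def IsTailEdge (b0 : V) (T : Set (V × V)) (p : V × V) : Prop :=
  p ∈ T ∧ (fromDir (T \ {p})).Reachable b0 p.1

/-- The set of tail-edges of `T`. -/
def tailEdges (b0 : V) (T : Set (V × V)) : Set (V × V) :=
  {p | IsTailEdge b0 T p}

/-- The number of tail-edges of `T`. -/
noncomputable def numTailEdges (b0 : V) (T : Set (V × V)) : ℕ :=
  Nat.card (tailEdges b0 T)

/-- The ordering `≺` of Jaeger trees of one facet graph: `T' ≺ T` iff their tours first
differ at a current node–edge pair `(t, th)` with the directed edge `th ∉ T'` and `th ∈ T`. -/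
def treePrec (ρ : V → V → V) (b0 b1 : V) (T' T : Set (V × V)) : Prop :=
  ∃ n : ℕ, (∀ m ≤ n, tourSeq ρ (und T') b0 b1 m = tourSeq ρ (und T) b0 b1 m) ∧
    tourSeq ρ (und T) b0 b1 n ∈ T ∧ tourSeq ρ (und T) b0 b1 n ∉ T'

/-- The standard basis vector of `ℝ^V` corresponding to a vertex. -/
noncomputable def stdVec (v : V) : V → ℝ := fun w => if w = v then 1 else 0

/-- The symmetric edge polytope of `G`. -/
noncomputable def symEdgePolytope (G : SimpleGraph V) : Set (V → ℝ) :=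
  convexHull ℝ {x | ∃ u v, G.Adj u v ∧ x = stdVec u - stdVec v}

/-- The (root polytope) simplex spanned by a set of directed edges. -/
noncomputable def simplexOf (T : Set (V × V)) : Set (V → ℝ) :=
  convexHull ℝ {x | ∃ p ∈ T, x = stdVec p.2 - stdVec p.1}

/-- A weight function with base vertex `b0`. -/
structure IsWeight (b0 : V) (f : V → ℝ) : Prop where
  base : f b0 = 1
  lb : ∀ v, v ≠ b0 → -1 ≤ f v
  ub : ∀ v, v ≠ b0 → f v ≤ 0
  total : ∑ v ∈ Finset.univ.erase b0, f v = -1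
  indep : LinearIndependent ℚ (fun v : {w : V // w ≠ b0} => f v.1)

/-- The number of lattice points of the `k`-th dilate of the symmetric edge polytope. -/
noncomputable def latticeCount (G : SimpleGraph V) (k : ℕ) : ℕ :=
  Nat.card {x : V → ℤ // (fun v => (x v : ℝ)) ∈ (k : ℝ) • symEdgePolytope G}

/-- `s` is a side of a bipartition of `G`. -/
def IsBipartition (G : SimpleGraph V) (s : Set V) : Prop :=
  ∀ ⦃u v⦄, G.Adj u v → (u ∈ s ↔ v ∉ s)

/-- A digraph (set of directed edges) is semi-balanced if every cycle of the underlying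
undirected graph has the same number of edges oriented in the two cyclic directions. -/
def IsSemiBalanced (D : Set (V × V)) : Prop :=
  ∀ ⦃v : V⦄ (w : (fromDir D).Walk v v), w.IsCycle →
    (w.darts.countP fun d => decide ((d.toProd.1, d.toProd.2) ∈ D)) =
      (w.darts.countP fun d => decide ((d.toProd.2, d.toProd.1) ∈ D))

/-- `D` is an orientation of (all the edges of) `G`. -/
def IsOrientation (G : SimpleGraph V) (D : Set (V × V)) : Prop :=
  (∀ p ∈ D, G.Adj p.1 p.2) ∧ ∀ ⦃u v⦄, G.Adj u v → ((u, v) ∈ D ↔ (v, u) ∉ D)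

/-- The state of the greedy process: the set `H` of included directed edges, the set of
node–edge pairs that have already been current, and the current node–edge pair. -/
structure GreedyState (V : Type*) where
  H : Set (V × V)
  seen : Set (V × V)
  cur : V × V

/-- One step of the (almost-)greedy process in the digraph `D`; `special` is the set of
directed edges that are exceptionally included when first reached at their tail
(`special = ∅` gives the greedy process, `special = {(u,v)}` the u→v-almost greedy one).
Hidden edges (incident pairs whose edge is absent from `D`) are skipped. -/
noncomputable def greedyStep (D special : Set (V × V)) (ρ : V → V → V)
    (s : GreedyState V) : GreedyState V :=
  let x := s.cur.1
  let y := s.cur.2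
  let seen' := s.seen ∪ {s.cur}
  if (y, x) ∈ D then
    -- the current node `x` is the head of the directed edge (y, x)
    if (y, x) ∈ s.seen then ⟨s.H, seen', (x, ρ x y)⟩
    else ⟨s.H ∪ {(y, x)}, seen', (y, ρ y x)⟩
  else if (x, y) ∈ D then
    -- the current node `x` is the tail of the directed edge (x, y)
    if s.cur ∈ special ∧ (y, x) ∉ s.seen then ⟨s.H ∪ {(x, y)}, seen', (y, ρ y x)⟩
    else if (y, x) ∈ s.seen then ⟨s.H, seen', (y, ρ y x)⟩
    else ⟨s.H, seen', (x, ρ x y)⟩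
  else ⟨s.H, seen', (x, ρ x y)⟩

/-- The sequence of states of the (almost-)greedy process started at the basis `(b0, b1)`. -/
noncomputable def greedySeq (D special : Set (V × V)) (ρ : V → V → V) (b0 b1 : V)
    (n : ℕ) : GreedyState V :=
  (greedyStep D special ρ)^[n] ⟨∅, ∅, (b0, b1)⟩

/-- The stopping time of the (almost-)greedy process: the first moment at which a node–edge
pair becomes current for the second time. -/
noncomputable def greedyStopTime (D special : Set (V × V)) (ρ : V → V → V) (b0 b1 : V) : ℕ :=
  sInf {n | (greedySeq D special ρ b0 b1 n).cur ∈ (greedySeq D special ρ b0 b1 n).seen}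

/-- The edge set produced by the (almost-)greedy process. -/
noncomputable def greedyOutput (D special : Set (V × V)) (ρ : V → V → V) (b0 b1 : V) :
    Set (V × V) :=
  (greedySeq D special ρ b0 b1 (greedyStopTime D special ρ b0 b1)).H

/-- The status of the current node–edge pair `p = (x, y)` (node `x`, edge `xy`) with respect
to a facet graph `D` and a tree `T ⊆ D`: `0` if the edge is in the tree oriented y→x,
`1` if it is hidden, `2` if it is oriented x→y in `D` but not in the tree, `3` if it is in
the tree oriented x→y (and `4` in the remaining case: oriented y→x in `D` but not in `T`). -/
noncomputable def edgeStatus (D T : Set (V × V)) (p : V × V) : ℕ :=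
  if (p.2, p.1) ∈ T then 0
  else if (p.1, p.2) ∈ T then 3
  else if (p.1, p.2) ∈ D then 2
  else if (p.2, p.1) ∈ D then 4
  else 1

/-- The quadratic order `<₄` on Jaeger trees (with their facet graphs): the tours, together
with the statuses of the current edges, agree up to step `n`, and at step `n` the status of
the current edge for the first tree is smaller than for the second one. -/
def quadLT (ρ : V → V → V) (b0 b1 : V) (q q' : Set (V × V) × Set (V × V)) : Prop :=
  ∃ n : ℕ,
    (∀ m < n, tourSeq ρ (und q.2) b0 b1 m = tourSeq ρ (und q'.2) b0 b1 m ∧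
      edgeStatus q.1 q.2 (tourSeq ρ (und q.2) b0 b1 m) =
        edgeStatus q'.1 q'.2 (tourSeq ρ (und q'.2) b0 b1 m)) ∧
    tourSeq ρ (und q.2) b0 b1 n = tourSeq ρ (und q'.2) b0 b1 n ∧
    edgeStatus q.1 q.2 (tourSeq ρ (und q.2) b0 b1 n) <
      edgeStatus q'.1 q'.2 (tourSeq ρ (und q'.2) b0 b1 n)

end SEP

namespace SEP

section Aux

variable {W : Type*}

lemma fromDir_adj (T : Set (W × W)) (u v : W) :
    (fromDir T).Adj u v ↔ u ≠ v ∧ ((u, v) ∈ T ∨ (v, u) ∈ T) := by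
  simp [fromDir, SimpleGraph.fromRel_adj]

lemma mem_und (T : Set (W × W)) (u v : W) :
    s(u, v) ∈ und T ↔ ((u, v) ∈ T ∨ (v, u) ∈ T) := by
  constructor
  · rintro ⟨⟨a, b⟩, hp, h⟩
    rcases Sym2.eq_iff.1 h with ⟨rfl, rfl⟩ | ⟨rfl, rfl⟩
    · exact Or.inl hp
    · exact Or.inr hp
  · rintro (h | h)
    · exact ⟨_, h, rfl⟩
    · exact ⟨_, h, Sym2.eq_swap⟩

lemma tourSeq_succ (ρ : W → W → W) (E : Set (Sym2 W)) (b0 b1 : W) (n : ℕ) :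
    tourSeq ρ E b0 b1 (n + 1) = tourStep ρ E (tourSeq ρ E b0 b1 n) := by
  simp only [tourSeq, Function.iterate_succ_apply']

lemma tourStep_adj {G : SimpleGraph W} {ρ : W → W → W} (hrib : IsRibbon G ρ)
    (E : Set (Sym2 W)) (p : W × W) (hp : G.Adj p.1 p.2) :
    G.Adj (tourStep ρ E p).1 (tourStep ρ E p).2 := by
  unfold tourStep
  split_ifs
  · exact hrib.adj hp.symm
  · exact hrib.adj hp

lemma iterate_rho_adj {G : SimpleGraph W} {ρ : W → W → W} (hrib : IsRibbon G ρ)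
    {x y : W} (h : G.Adj x y) (k : ℕ) : G.Adj x ((ρ x)^[k] y) := by
  induction k with
  | zero => exact h
  | succ k ih => rw [Function.iterate_succ_apply']; exact hrib.adj ih

/-- The tour step is periodic on the darts of `G`. -/
lemma tour_periodic [Finite W] {G : SimpleGraph W} {ρ : W → W → W} (hrib : IsRibbon G ρ)
    (E : Set (Sym2 W)) (p : W × W) (hp : G.Adj p.1 p.2) :
    ∃ k, 0 < k ∧ (tourStep ρ E)^[k] p = p := by
  let F : {p : W × W // G.Adj p.1 p.2} → {p : W × W // G.Adj p.1 p.2} :=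
    fun q => ⟨tourStep ρ E q.1, tourStep_adj hrib E q.1 q.2⟩
  have hsurj : Function.Surjective F := by
    rintro ⟨⟨x, y⟩, hxy⟩
    obtain ⟨k, hk⟩ := hrib.cyc (hrib.adj hxy) hxy
    rw [← Function.iterate_succ_apply, Function.iterate_succ_apply'] at hk
    have hz := iterate_rho_adj hrib hxy k
    generalize (ρ x)^[k] y = z at hk hz
    by_cases hE : s(x, z) ∈ E
    · refine ⟨⟨(z, x), hz.symm⟩, ?_⟩
      apply Subtype.ext
      have : s(z, x) ∈ E := by rwa [Sym2.eq_swap]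
      simp [F, tourStep, this, hk]
    · refine ⟨⟨(x, z), hz⟩, ?_⟩
      apply Subtype.ext
      simp [F, tourStep, hE, hk]
  have hinj : Function.Injective F := Finite.injective_iff_surjective.2 hsurj
  obtain ⟨k, hk, h⟩ := hinj.mem_periodicPts ⟨p, hp⟩
  refine ⟨k, hk, ?_⟩
  have key : ∀ (n : ℕ) (q), ((F^[n] q : {p : W × W // G.Adj p.1 p.2}) : W × W)
      = (tourStep ρ E)^[n] q.1 := by
    intro n
    induction n with
    | zero => intro q; rfl
    | succ n ih => intro q; rw [Function.iterate_succ_apply, ih, Function.iterate_succ_apply]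
  have := key k ⟨p, hp⟩
  rw [h] at this
  exact this.symm

/-- Crossing a tree edge from `x`, the tour has to come back through it. -/
lemma tour_return [Finite W] {G H : SimpleGraph W} {ρ : W → W → W} (hrib : IsRibbon G ρ)
    (hle : H ≤ G) (hac : H.IsAcyclic) (E : Set (Sym2 W))
    (hE : ∀ u v, s(u, v) ∈ E ↔ H.Adj u v) {x y : W} (hxy : H.Adj x y) :
    ∃ k, (tourStep ρ E)^[k] (x, y) = (y, x) := by
  by_contra hno
  push Not at hno
  have hbr : ¬ (H.deleteEdges {s(x, y)}).Reachable x y := by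
    have := SimpleGraph.isAcyclic_iff_forall_edge_isBridge.1 hac (e := s(x, y)) hxy
    exact SimpleGraph.isBridge_iff.1 this
  have key : ∀ j, (H.deleteEdges {s(x, y)}).Reachable y ((tourStep ρ E)^[j + 1] (x, y)).1 := by
    intro j
    induction j with
    | zero =>
      have : s(x, y) ∈ E := (hE x y).2 hxy
      simp [tourStep, this]
    | succ j ih =>
      rw [Function.iterate_succ_apply']
      have hn := hno (j + 1)
      generalize (tourStep ρ E)^[j + 1] (x, y) = q at ih hn
      obtain ⟨u, v⟩ := q
      unfold tourStep
      split_ifs with h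
      · refine ih.trans (SimpleGraph.Adj.reachable ?_)
        rw [SimpleGraph.deleteEdges_adj]
        refine ⟨(hE _ _).1 h, ?_⟩
        intro heq
        rcases Sym2.eq_iff.1 (Set.mem_singleton_iff.1 heq) with ⟨h1, h2⟩ | ⟨h1, h2⟩
        · simp only at h1 ih; subst h1
          exact hbr ih.symm
        · simp only at h1 h2
          exact hn (by rw [h1, h2])
      · exact ih
  obtain ⟨k, hk, h⟩ := tour_periodic hrib E (x, y) (hle hxy)
  obtain ⟨j, rfl⟩ : ∃ j, k = j + 1 := ⟨k - 1, by omega⟩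
  have := key j
  rw [h] at this
  exact hbr this.symm

/-- The tour of a spanning tree visits all node-edge pairs. -/
lemma tour_visits [Finite W] {G H : SimpleGraph W} {ρ : W → W → W} (hrib : IsRibbon G ρ)
    (hle : H ≤ G) (htree : H.IsTree) (E : Set (Sym2 W))
    (hE : ∀ u v, s(u, v) ∈ E ↔ H.Adj u v) {b0 b1 : W} (hb : G.Adj b0 b1)
    {x y : W} (hxy : G.Adj x y) : ∃ n, tourSeq ρ E b0 b1 n = (x, y) := by
  have step : ∀ p, (∃ n, tourSeq ρ E b0 b1 n = p) →
      ∀ k, ∃ n, tourSeq ρ E b0 b1 n = (tourStep ρ E)^[k] p := by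
    rintro p ⟨n, rfl⟩ k
    exact ⟨k + n, by simp only [tourSeq, Function.iterate_add_apply]⟩
  have ret : ∀ u v, H.Adj u v → (∃ n, tourSeq ρ E b0 b1 n = (u, v)) →
      ∃ n, tourSeq ρ E b0 b1 n = (v, u) := by
    intro u v huv h
    obtain ⟨k, hk⟩ := tour_return hrib hle htree.isAcyclic E hE huv
    rw [← hk]
    exact step _ h k
  have rot : ∀ u v, (∃ n, tourSeq ρ E b0 b1 n = (u, v)) →
      ∃ n, tourSeq ρ E b0 b1 n = (u, ρ u v) := by
    intro u v h
    by_cases huv : s(u, v) ∈ E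
    · obtain ⟨n, hn⟩ := step _ (ret u v ((hE _ _).1 huv) h) 1
      refine ⟨n, hn.trans ?_⟩
      have : s(v, u) ∈ E := by rwa [Sym2.eq_swap]
      simp [tourStep, this]
    · obtain ⟨n, hn⟩ := step _ h 1
      refine ⟨n, hn.trans ?_⟩
      simp [tourStep, huv]
  have all : ∀ u v, G.Adj u v → (∃ n, tourSeq ρ E b0 b1 n = (u, v)) →
      ∀ w, G.Adj u w → ∃ n, tourSeq ρ E b0 b1 n = (u, w) := by
    intro u v huv h w hw
    obtain ⟨k, rfl⟩ := hrib.cyc huv hw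
    clear hw
    induction k with
    | zero => exact h
    | succ k ih => rw [Function.iterate_succ_apply']; exact rot _ _ ih
  have main : ∀ (u : W), H.Walk u b0 → ∀ w, G.Adj u w → ∃ n, tourSeq ρ E b0 b1 n = (u, w) := by
    intro u q
    induction q with
    | nil => exact all _ b1 hb ⟨0, rfl⟩
    | @cons u v _ h q ih =>
      exact all u v (hle h) (ret v u h.symm (ih hb step ret rot all u (hle h.symm)))
  obtain ⟨q⟩ := htree.connected x b0
  exact main x q y hxy

/-- If the edge `xy` was not reached before time `n`, the tour stays in one component. -/
lemma tour_reach {H : SimpleGraph W} {ρ : W → W → W} (E : Set (Sym2 W))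
    (hE : ∀ u v, s(u, v) ∈ E ↔ H.Adj u v) (b0 b1 : W) (e : Sym2 W) (n : ℕ)
    (hn : ∀ m < n, s((tourSeq ρ E b0 b1 m).1, (tourSeq ρ E b0 b1 m).2) ≠ e) :
    (H.deleteEdges {e}).Reachable b0 (tourSeq ρ E b0 b1 n).1 := by
  induction n with
  | zero => exact SimpleGraph.Reachable.refl _
  | succ n ih =>
    have ih := ih (fun m hm => hn m (by omega))
    have h := hn n (by omega)
    rw [tourSeq_succ]
    generalize tourSeq ρ E b0 b1 n = q at ih h
    unfold tourStep
    split_ifs with hq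
    · refine ih.trans (SimpleGraph.Adj.reachable ?_)
      rw [SimpleGraph.deleteEdges_adj]
      exact ⟨(hE _ _).1 hq, h⟩
    · exact ih

/-- Reachability avoiding an undirected edge gives a tail-edge. -/
lemma isTailEdge_of_reach {T : Set (W × W)} {b0 x y : W} (hxy : (x, y) ∈ T) (hyx : (y, x) ∉ T)
    (h : ((fromDir T).deleteEdges {s(x, y)}).Reachable b0 x) : IsTailEdge b0 T (x, y) := by
  refine ⟨hxy, h.mono ?_⟩
  intro u v huv
  rw [SimpleGraph.deleteEdges_adj, fromDir_adj] at huv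
  rw [fromDir_adj]
  obtain ⟨⟨hne, hT⟩, he⟩ := huv
  refine ⟨hne, ?_⟩
  rcases hT with hT | hT
  · refine Or.inl ⟨hT, ?_⟩
    rintro h
    simp only [Set.mem_singleton_iff, Prod.mk.injEq] at h
    exact he (by simp [h.1, h.2])
  · refine Or.inr ⟨hT, ?_⟩
    rintro h
    simp only [Set.mem_singleton_iff, Prod.mk.injEq] at h
    exact he (by simp [h.1, h.2])

lemma facet_asymm {G : SimpleGraph W} {l : W → ℤ} {x y : W} (h : (x, y) ∈ facetDigraph G l) :
    (y, x) ∉ facetDigraph G l := by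
  rintro ⟨_, h2⟩
  have := h.2
  simp only at this h2
  omega

/-- The layer difference is monotone along the tree. -/
lemma layer_mono {G : SimpleGraph W} {l l' : W → ℤ}
    (hl' : IsLayering G l') {T T' : Set (W × W)}
    (hT : T ⊆ facetDigraph G l) (hT' : T' ⊆ facetDigraph G l') (htree : (fromDir T).IsTree)
    {b0 : W} (htail : tailEdges b0 T ⊆ T') (v : W) :
    l' b0 - l b0 ≤ l' v - l v := by
  obtain ⟨q, hq⟩ := (htree.connected v b0).exists_isPath
  induction q with
  | nil => exact le_rfl
  | @cons v w b0 h q ih =>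
    rw [SimpleGraph.Walk.cons_isPath_iff] at hq
    refine (ih htail hq.1).trans ?_
    rcases ((fromDir_adj _ _ _).1 h).2 with hvw | hwv
    · have h1 := (hT hvw).2
      have h2 := hl'.step (hT hvw).1
      have := abs_le.1 h2
      simp only at h1 this
      omega
    · have htl : IsTailEdge b0 T (w, v) := by
        refine isTailEdge_of_reach hwv (fun h => facet_asymm (hT hwv) (hT h)) ?_
        refine (SimpleGraph.Walk.reachable (q.toDeleteEdge s(w, v) ?_)).symm
        intro hmem
        exact hq.2 (SimpleGraph.Walk.snd_mem_support_of_mem_edges q hmem)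
      have h1 := (hT hwv).2
      have h2 := (hT' (htail htl)).2
      simp only at h1 h2
      omega

/-- At the first difference of the tours the two trees cannot differ. -/
lemma first_diff [Finite W] {G : SimpleGraph W} {ρ : W → W → W} (hrib : IsRibbon G ρ)
    {b0 b1 : W} (hb : G.Adj b0 b1) {l : W → ℤ} {T T' : Set (W × W)}
    (hT : IsJaegerTree ρ b0 b1 (facetDigraph G l) T)
    (hT' : IsJaegerTree ρ b0 b1 (facetDigraph G l) T')
    (htail : tailEdges b0 T ⊆ T') (n : ℕ)
    (heq : ∀ m ≤ n, tourSeq ρ (und T) b0 b1 m = tourSeq ρ (und T') b0 b1 m)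
    (hst : ∀ m < n, s((tourSeq ρ (und T) b0 b1 m).1, (tourSeq ρ (und T) b0 b1 m).2) ∈ und T →
      s((tourSeq ρ (und T) b0 b1 m).1, (tourSeq ρ (und T) b0 b1 m).2) ∈ und T')
    (h : s((tourSeq ρ (und T) b0 b1 n).1, (tourSeq ρ (und T) b0 b1 n).2) ∈ und T) :
    s((tourSeq ρ (und T) b0 b1 n).1, (tourSeq ρ (und T) b0 b1 n).2) ∈ und T' := by
  by_contra hno
  obtain ⟨⟨hTD, htree⟩, hjT⟩ := hT
  obtain ⟨⟨hTD', htree'⟩, hjT'⟩ := hT'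
  have hE : ∀ U : Set (W × W), U ⊆ facetDigraph G l →
      ∀ u v, s(u, v) ∈ und U ↔ (fromDir U).Adj u v := by
    intro U hU u v
    rw [mem_und, fromDir_adj]
    refine ⟨fun h => ⟨?_, h⟩, fun h => h.2⟩
    rcases h with h | h
    · exact (hU h).1.ne
    · exact (hU h).1.ne'
  have hle : ∀ U : Set (W × W), U ⊆ facetDigraph G l → fromDir U ≤ G := by
    intro U hU u v huv
    rcases ((fromDir_adj _ _ _).1 huv).2 with h | h
    · exact (hU h).1
    · exact (hU h).1.symm
  have hne : ∀ m < n, s((tourSeq ρ (und T) b0 b1 m).1, (tourSeq ρ (und T) b0 b1 m).2) ≠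
      s((tourSeq ρ (und T) b0 b1 n).1, (tourSeq ρ (und T) b0 b1 n).2) := by
    intro m hm hh
    have := hst m hm
    rw [hh] at this
    exact hno (this h)
  have hr := tour_reach (ρ := ρ) (und T) (hE T hTD) b0 b1 _ n hne
  have hn' := (heq n le_rfl).symm
  generalize hq : tourSeq ρ (und T) b0 b1 n = q at *
  obtain ⟨x, y⟩ := q
  simp only at h hno hr hne
  rcases (mem_und _ _ _).1 h with hxy | hyx
  · have := htail (isTailEdge_of_reach hxy (fun h => facet_asymm (hTD hxy) (hTD h)) hr)
    exact hno ((mem_und _ _ _).2 (Or.inl this))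
  · have hlt := hjT' (y, x) (hTD hyx) (by rwa [Sym2.eq_swap] at hno)
    simp only at hlt
    have h1 : firstVisit ρ (und T') b0 b1 x y ≤ n := Nat.sInf_le hn'
    obtain ⟨k, hk⟩ := tour_visits hrib (hle T' hTD') htree' (und T') (hE T' hTD') hb
      (hTD hyx).1
    have h2 : tourSeq ρ (und T') b0 b1 (firstVisit ρ (und T') b0 b1 y x) = (y, x) :=
      Nat.sInf_mem (s := {n | tourSeq ρ (und T') b0 b1 n = (y, x)}) ⟨k, hk⟩
    have h3 : firstVisit ρ (und T') b0 b1 y x < n := by omega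
    rw [← heq _ h3.le] at h2
    have := hne _ h3
    rw [h2] at this
    exact this Sym2.eq_swap

/-- Two Jaeger trees of one facet graph, each containing the tail-edges of the other one,
have the same tours, hence the same underlying edges. -/
lemma und_subset [Finite W] {G : SimpleGraph W} {ρ : W → W → W} (hrib : IsRibbon G ρ)
    {b0 b1 : W} (hb : G.Adj b0 b1) {l : W → ℤ} {T T' : Set (W × W)}
    (hT : IsJaegerTree ρ b0 b1 (facetDigraph G l) T)
    (hT' : IsJaegerTree ρ b0 b1 (facetDigraph G l) T')
    (htail : tailEdges b0 T ⊆ T') (htail' : tailEdges b0 T' ⊆ T) : T ⊆ T' := by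
  have key : ∀ n, tourSeq ρ (und T) b0 b1 n = tourSeq ρ (und T') b0 b1 n ∧
      (s((tourSeq ρ (und T) b0 b1 n).1, (tourSeq ρ (und T) b0 b1 n).2) ∈ und T ↔
      s((tourSeq ρ (und T) b0 b1 n).1, (tourSeq ρ (und T) b0 b1 n).2) ∈ und T') := by
    intro n
    induction n using Nat.strong_induction_on with
    | _ n ih =>
      have h0 : tourSeq ρ (und T) b0 b1 n = tourSeq ρ (und T') b0 b1 n := by
        cases n with
        | zero => rfl
        | succ n =>
          obtain ⟨h1, h2⟩ := ih n (by omega)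
          rw [tourSeq_succ, tourSeq_succ, ← h1]
          unfold tourStep
          simp only [h2]
      have heq : ∀ m ≤ n, tourSeq ρ (und T) b0 b1 m = tourSeq ρ (und T') b0 b1 m := by
        intro m hm
        rcases hm.lt_or_eq with hm | rfl
        · exact (ih m hm).1
        · exact h0
      refine ⟨h0, ?_, ?_⟩
      · exact first_diff hrib hb hT hT' htail n heq (fun m hm => (ih m hm).2.1)
      · have := first_diff hrib hb hT' hT htail' n (fun m hm => (heq m hm).symm) (fun m hm => by
          rw [← heq m hm.le]; exact (ih m hm).2.2)
        rwa [← h0] at this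
  rintro ⟨x, y⟩ hxy
  obtain ⟨⟨hTD, htree⟩, -⟩ := hT
  have hE : ∀ u v, s(u, v) ∈ und T ↔ (fromDir T).Adj u v := by
    intro u v
    rw [mem_und, fromDir_adj]
    refine ⟨fun h => ⟨?_, h⟩, fun h => h.2⟩
    rcases h with h | h
    · exact (hTD h).1.ne
    · exact (hTD h).1.ne'
  have hle : fromDir T ≤ G := by
    intro u v huv
    rcases ((fromDir_adj _ _ _).1 huv).2 with h | h
    · exact (hTD h).1
    · exact (hTD h).1.symm
  obtain ⟨n, hn⟩ := tour_visits hrib hle htree (und T) hE hb (hTD hxy).1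
  have := (key n).2
  rw [hn] at this
  rcases (mem_und _ _ _).1 (this.1 ((mem_und _ _ _).2 (Or.inl hxy))) with h | h
  · exact h
  · exact absurd (hT'.1.1 h) (facet_asymm (hTD hxy))

end Aux

/-- If a Jaeger tree `T` contains the directed edges `e₁, …, e_r` and all tail-edges of `T`
are among them, then no Jaeger tree other than possibly `T` has `{e₁, …, e_r}` as its set of
tail-edges. -/
theorem stick_tree_stronger_uniqueness
    {V : Type*} [Fintype V] [DecidableEq V]
    (G : SimpleGraph V) (hG : G.Connected)
    (ρ : V → V → V) (hrib : IsRibbon G ρ) (b0 b1 : V) (hb : G.Adj b0 b1)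
    (J : Set (Set (V × V)))
    (hJ : J = {T | ∃ D : Set (V × V), IsFacetGraph G D ∧ IsJaegerTree ρ b0 b1 D T})
    (S : Finset (V × V)) (T : Set (V × V)) (hT : T ∈ J)
    (hsub : ↑S ⊆ T) (htail : tailEdges b0 T ⊆ ↑S) :
    ∀ T' ∈ J, tailEdges b0 T' = ↑S → T' = T := by
  subst hJ
  intro T' hT' hS
  obtain ⟨_, ⟨l, hl, rfl⟩, hj⟩ := hT
  obtain ⟨_, ⟨l', hl', rfl⟩, hj'⟩ := hT'
  have ht : tailEdges b0 T ⊆ T' := fun p hp => by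
    have : p ∈ tailEdges b0 T' := by rw [hS]; exact htail hp
    exact this.1
  have ht' : tailEdges b0 T' ⊆ T := by rw [hS]; exact hsub
  have hD : facetDigraph G l' = facetDigraph G l := by
    have h1 := layer_mono hl' hj.1.1 hj'.1.1 hj.1.2 ht
    have h2 := layer_mono hl hj'.1.1 hj.1.1 hj'.1.2 ht'
    ext ⟨u, v⟩
    have a1 := h1 u
    have a2 := h2 u
    have a3 := h1 v
    have a4 := h2 v
    simp only [facetDigraph, Set.mem_setOf_eq]
    refine and_congr_right fun _ => ?_
    constructor <;> intro h <;> omega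
  rw [hD] at hj'
  exact (und_subset hrib hb hj' hj ht' ht).antisymm (und_subset hrib hb hj hj' ht ht')

end SEP
end

section
/- For all nonnegative integers b, c, n with c ≤ b − 2n, the identity ∑_{a=0}^{n} binom(2a, a) · binom(b − 2a, n − a) = ∑_{a=0}^{n} binom(2a + c, a) · binom(b − c − 2a, n − a) holds. -/
open scoped Classical Pointwise

namespace SEP

/-- The convolution `∑_{i+j=n} C(2i+x, i) C(2j+m, j)`. -/
def convSum (n x m : ℕ) : ℕ :=
  ∑ p ∈ Finset.HasAntidiagonal.antidiagonal n, Nat.choose (2 * p.1 + x) p.1 * Nat.choose (2 * p.2 + m) p.2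

theorem convSum_left (n x m : ℕ) :
    convSum (n + 1) (x + 1) m = convSum (n + 1) x m + convSum n (x + 2) m := by
  unfold convSum
  rw [Finset.Nat.sum_antidiagonal_succ, Finset.Nat.sum_antidiagonal_succ, add_assoc,
    ← Finset.sum_add_distrib]
  simp only [Nat.choose_zero_right]
  congr 1
  refine Finset.sum_congr rfl fun p _ => ?_
  have e : (2 * (p.1 + 1) + (x + 1)).choose (p.1 + 1) =
      (2 * p.1 + (x + 2)).choose p.1 + (2 * (p.1 + 1) + x).choose (p.1 + 1) := by
    rw [show 2 * (p.1 + 1) + (x + 1) = (2 * p.1 + (x + 2)) + 1 by ring, Nat.choose_succ_succ,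
      show 2 * (p.1 + 1) + x = 2 * p.1 + (x + 2) by ring]
  rw [e]
  ring

theorem convSum_symm (n x m : ℕ) : convSum n x m = convSum n m x := by
  unfold convSum
  rw [← Finset.Nat.sum_antidiagonal_swap]
  exact Finset.sum_congr rfl fun p _ => mul_comm _ _

theorem convSum_shift (n : ℕ) : ∀ x m : ℕ, convSum n (x + 1) m = convSum n x (m + 1) := by
  induction n with
  | zero => intro x m; simp [convSum]
  | succ n ih =>
    intro x m
    rw [convSum_left, convSum_symm (n + 1) x (m + 1), convSum_left, convSum_symm (n + 1) m x,
      convSum_symm n (m + 2) x, ih (x + 1) m, ih x (m + 1)]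

theorem convSum_zero (n c : ℕ) : ∀ m : ℕ, convSum n c m = convSum n 0 (m + c) := by
  induction c with
  | zero => intro m; rfl
  | succ c ih => intro m; rw [convSum_shift, ih, add_right_comm, add_assoc]

/-- For all nonnegative integers `b c n` with `2n + c ≤ b`,
`∑_{a=0}^{n} C(2a, a) C(b − 2a, n − a) = ∑_{a=0}^{n} C(2a + c, a) C(b − c − 2a, n − a)`. -/
theorem binomial_identity (b c n : ℕ) (h : 2 * n + c ≤ b) :
    ∑ a ∈ Finset.range (n + 1), Nat.choose (2 * a) a * Nat.choose (b - 2 * a) (n - a) =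
      ∑ a ∈ Finset.range (n + 1),
        Nat.choose (2 * a + c) a * Nat.choose (b - c - 2 * a) (n - a) := by
  obtain ⟨d, rfl⟩ := Nat.exists_eq_add_of_le h
  have key := convSum_zero n c d
  unfold convSum at key
  rw [Finset.Nat.sum_antidiagonal_eq_sum_range_succ_mk,
    Finset.Nat.sum_antidiagonal_eq_sum_range_succ_mk] at key
  refine Eq.trans ?_ (key.symm.trans ?_)
  · refine Finset.sum_congr rfl fun a ha => ?_
    have := Finset.mem_range.1 ha
    rw [show 2 * n + c + d - 2 * a = 2 * (n - a) + (d + c) by omega, add_zero]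
  · refine Finset.sum_congr rfl fun a ha => ?_
    have := Finset.mem_range.1 ha
    rw [show 2 * n + c + d - c - 2 * a = 2 * (n - a) + d by omega]

end SEP
end

section
/- Let 𝒢 be a finite connected simple bipartite graph that is not a tree, with a fixed ribbon structure and basis (b_0, b_0b_1). Let 𝒯 be a spanning tree of 𝒢; for each edge e ∉ 𝒯 let e⃗ denote the orientation of e whose tail is reached before its head in the tour of 𝒯, and let x_{e⃗} = 𝐯 − 𝐮 for e⃗ = u→v. Fix 0 < δ < 1/|E| and set p_𝒯 = (1 + δ) · (1/|E ∖ 𝒯|) · ∑_{e ∉ 𝒯} x_{e⃗}. For each semi-balanced orientation G of 𝒢, let λ_G be the linear functional on the affine span of P_𝒢 with λ_G = 1 on the facet Q_G of P_𝒢 and λ_G ≤ 1 on P_𝒢. Then λ_G(p_𝒯) > 1 if the orientation that G induces on 𝒯 makes 𝒯 a Jaeger tree of G, and λ_G(p_𝒯) < 1 otherwise. In other words, the facets of P_𝒢 visible from p_𝒯 are exactly those facets Q_G in which 𝒯 is a Jaeger tree. -/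
open scoped Classical Pointwise

namespace SEP

/-- Visibility formula for bipartite graphs: for a spanning tree `𝒯` of a connected
bipartite non-tree graph `G`, orienting each non-tree edge so that its tail is reached
before its head in the tour of `𝒯`, the point
`p_𝒯 = (1 + δ) · (1/|E ∖ 𝒯|) · ∑_{e ∉ 𝒯} x_{e⃗}` (with `0 < δ < 1/|E|`) satisfies
`λ_G(p_𝒯) > 1` for the supporting functional `λ_G` of a facet `Q_G` exactly when `𝒯` is a
Jaeger tree of the corresponding semi-balanced orientation `G`, and `λ_G(p_𝒯) < 1`
otherwise; i.e. the facets visible from `p_𝒯` are exactly those in which `𝒯` is Jaeger. -/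
theorem visible_facets_are_jaeger_facets
    {V : Type*} [Fintype V] [DecidableEq V]
    (G : SimpleGraph V) (hG : G.Connected)
    (s : Set V) (hbip : IsBipartition G s) (hnt : ¬ G.IsAcyclic)
    (ρ : V → V → V) (hrib : IsRibbon G ρ) (b0 b1 : V) (hb : G.Adj b0 b1)
    (T : Set (Sym2 V)) (hTsub : T ⊆ G.edgeSet)
    (hTtree : (SimpleGraph.fromEdgeSet T).IsTree)
    (S : Set (V × V))
    (hS : S = {p : V × V | G.Adj p.1 p.2 ∧ s(p.1, p.2) ∉ T ∧
      firstVisit ρ T b0 b1 p.1 p.2 < firstVisit ρ T b0 b1 p.2 p.1})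
    (δ : ℝ) (hδ0 : 0 < δ) (hδ1 : δ < 1 / (Nat.card G.edgeSet : ℝ))
    (pT : V → ℝ)
    (hpT : pT = (1 + δ) •
      (Nat.card {e : Sym2 V // e ∈ G.edgeSet ∧ e ∉ T} : ℝ)⁻¹ •
      ∑ᶠ p ∈ S, (stdVec p.2 - stdVec p.1))
    (D : Set (V × V)) (hD : IsOrientation G D) (hsb : IsSemiBalanced D)
    (lam : (V → ℝ) →ₗ[ℝ] ℝ)
    (hlam1 : ∀ x ∈ simplexOf D, lam x = 1)
    (hlam2 : ∀ x ∈ symEdgePolytope G, lam x ≤ 1) :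
    (IsJaegerTree ρ b0 b1 D {p ∈ D | s(p.1, p.2) ∈ T} → lam pT > 1) ∧
    (¬ IsJaegerTree ρ b0 b1 D {p ∈ D | s(p.1, p.2) ∈ T} → lam pT < 1) := by
  classical
  have hD1 : ∀ p ∈ D, lam (stdVec p.2 - stdVec p.1) = 1 := fun p hp =>
    hlam1 _ (subset_convexHull ℝ _ ⟨p, hp, rfl⟩)
  have hund : und {p ∈ D | s(p.1, p.2) ∈ T} = T := by
    ext e
    constructor
    · rintro ⟨p, hp, rfl⟩
      exact hp.2
    · intro he
      induction e using Sym2.ind with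
      | _ x y =>
        have hadj : G.Adj x y := hTsub he
        by_cases h : (x, y) ∈ D
        · exact ⟨(x, y), ⟨h, he⟩, rfl⟩
        · have h' : (y, x) ∈ D := by
            by_contra h2
            exact h ((hD.2 hadj).2 h2)
          refine ⟨(y, x), ⟨h', ?_⟩, Sym2.eq_swap⟩
          rw [Sym2.eq_swap]
          exact he
  have hspan : IsSpanningTreeOf {p ∈ D | s(p.1, p.2) ∈ T} D := by
    refine ⟨fun p hp => hp.1, ?_⟩
    have : fromDir {p ∈ D | s(p.1, p.2) ∈ T} = SimpleGraph.fromEdgeSet T := by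
      ext x y
      have hmem : s(x, y) ∈ T ↔ s(x, y) ∈ und {p ∈ D | s(p.1, p.2) ∈ T} := by rw [hund]
      rw [SimpleGraph.fromEdgeSet_adj, hmem, fromDir, SimpleGraph.fromRel_adj]
      constructor
      · rintro ⟨hne, h | h⟩
        · exact ⟨⟨(x, y), h, rfl⟩, hne⟩
        · exact ⟨⟨(y, x), h, Sym2.eq_swap⟩, hne⟩
      · rintro ⟨⟨⟨a, b⟩, h, he⟩, hne⟩
        refine ⟨hne, ?_⟩
        rcases Sym2.eq_iff.1 he with ⟨rfl, rfl⟩ | ⟨rfl, rfl⟩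
        · exact Or.inl h
        · exact Or.inr h
    rw [this]
    exact hTtree
  set A : Set (V × V) := {p ∈ D | s(p.1, p.2) ∉ T} with hA
  have hJ : IsJaegerTree ρ b0 b1 D {p ∈ D | s(p.1, p.2) ∈ T} ↔ A ⊆ S := by
    unfold IsJaegerTree
    rw [hund, hS]
    constructor
    · rintro ⟨-, h⟩ p hp
      exact ⟨hD.1 p hp.1, hp.2, h p hp.1 hp.2⟩
    · intro h
      exact ⟨hspan, fun p hp hpT => (h ⟨hp, hpT⟩).2.2⟩
  set N : ℕ := Nat.card {e : Sym2 V // e ∈ G.edgeSet ∧ e ∉ T} with hN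
  have hcard : A.toFinset.card = N := by
    rw [Set.toFinset_card, ← Nat.card_eq_fintype_card, hN]
    refine Nat.card_congr (Equiv.ofBijective
      (fun p : A => (⟨s(p.1.1, p.1.2), hD.1 _ p.2.1, p.2.2⟩ :
        {e : Sym2 V // e ∈ G.edgeSet ∧ e ∉ T})) ⟨?_, ?_⟩)
    · rintro ⟨⟨a, b⟩, h1, h2⟩ ⟨⟨c, d⟩, h3, h4⟩ h
      have h5 : s(a, b) = s(c, d) := congrArg Subtype.val h
      rcases Sym2.eq_iff.1 h5 with ⟨rfl, rfl⟩ | ⟨rfl, rfl⟩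
      · rfl
      · exact absurd h3 ((hD.2 (hD.1 _ h1)).1 h1)
    · rintro ⟨e, he, heT⟩
      induction e using Sym2.ind with
      | _ x y =>
        have hadj : G.Adj x y := he
        by_cases h : (x, y) ∈ D
        · exact ⟨⟨(x, y), h, heT⟩, rfl⟩
        · have h' : (y, x) ∈ D := by
            by_contra h2
            exact h ((hD.2 hadj).2 h2)
          have hyx : s(y, x) = s(x, y) := Sym2.eq_swap
          refine ⟨⟨(y, x), h', ?_⟩, ?_⟩
          · show s(y, x) ∉ T
            rw [hyx]
            exact heT
          · exact Subtype.ext hyx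
  have hNpos : 0 < N := by
    rw [Nat.pos_iff_ne_zero]
    intro h0
    apply hnt
    have hle : G ≤ SimpleGraph.fromEdgeSet T := by
      intro x y hxy
      rw [SimpleGraph.fromEdgeSet_adj]
      refine ⟨?_, hxy.ne⟩
      by_contra hT
      have : IsEmpty {e : Sym2 V // e ∈ G.edgeSet ∧ e ∉ T} := by
        rcases Nat.card_eq_zero.1 h0 with h | h
        · exact h
        · exact absurd h (not_infinite_iff_finite.2 inferInstance)
      exact this.false ⟨s(x, y), hxy, hT⟩
    exact hTtree.isAcyclic.anti hle
  have hNE : N ≤ Nat.card G.edgeSet :=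
    Nat.card_le_card_of_injective
      (fun e : {e : Sym2 V // e ∈ G.edgeSet ∧ e ∉ T} => (⟨e.1, e.2.1⟩ : G.edgeSet))
      (fun a b h => Subtype.ext (congrArg (fun z : G.edgeSet => z.1) h))
  have hNR : (0 : ℝ) < N := by exact_mod_cast hNpos
  have hδN : δ * N < 1 := by
    have h1 : δ < 1 / (N : ℝ) :=
      lt_of_lt_of_le hδ1 (one_div_le_one_div_of_le hNR (by exact_mod_cast hNE))
    rwa [lt_div_iff₀ hNR] at h1
  have hval : lam pT = (1 + δ) * ((N : ℝ)⁻¹ *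
      ∑ p ∈ S.toFinset, lam (stdVec p.2 - stdVec p.1)) := by
    rw [hpT, finsum_mem_eq_toFinset_sum, map_smul, map_smul, map_sum, smul_eq_mul, smul_eq_mul]
  have hSneg : ∀ p ∈ S, p ∉ D → lam (stdVec p.2 - stdVec p.1) = -1 := by
    intro p hp hpD
    rw [hS] at hp
    have h' : (p.2, p.1) ∈ D := by
      by_contra h2
      exact hpD ((hD.2 hp.1).2 h2)
    have := hD1 _ h'
    rw [← neg_sub, map_neg]
    exact congrArg Neg.neg this
  have hSA : ∀ p ∈ S, p ∈ D → p ∈ A := by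
    intro p hp hpD
    rw [hS] at hp
    exact ⟨hpD, hp.2.1⟩
  rw [hJ]
  constructor
  · intro hAS
    have hEq : S = A := by
      apply Set.Subset.antisymm _ hAS
      intro p hp
      by_cases hpD : p ∈ D
      · exact hSA p hp hpD
      · exfalso
        rw [hS] at hp hAS
        have h' : (p.2, p.1) ∈ D := by
          by_contra h2
          exact hpD ((hD.2 hp.1).2 h2)
        have hyx : s(p.2, p.1) = s(p.1, p.2) := Sym2.eq_swap
        have h3 : (p.2, p.1) ∈ A := by
          refine ⟨h', ?_⟩
          show s(p.2, p.1) ∉ T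
          rw [hyx]
          exact hp.2.1
        exact lt_asymm hp.2.2 (hAS h3).2.2
    have hsum : ∑ p ∈ S.toFinset, lam (stdVec p.2 - stdVec p.1) = N := by
      rw [← hcard, Finset.sum_congr rfl (g := fun _ => (1 : ℝ))]
      · simp only [hEq]
        simp
      · intro p hp
        rw [Set.mem_toFinset, hEq] at hp
        exact hD1 p hp.1
    rw [hval, hsum, inv_mul_cancel₀ hNR.ne']
    linarith
  · intro hAS
    obtain ⟨q, hqA, hqS⟩ := Set.not_subset.1 hAS
    have hsum : ∑ p ∈ S.toFinset, lam (stdVec p.2 - stdVec p.1) ≤ N - 1 := by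
      calc ∑ p ∈ S.toFinset, lam (stdVec p.2 - stdVec p.1)
          ≤ ∑ p ∈ S.toFinset, (if p ∈ D then (1 : ℝ) else 0) := by
            apply Finset.sum_le_sum
            intro p hp
            rw [Set.mem_toFinset] at hp
            split_ifs with h
            · exact (hD1 p h).le
            · rw [hSneg p hp h]
              norm_num
        _ = ((S.toFinset.filter (· ∈ D)).card : ℝ) := by
            rw [Finset.sum_boole]
        _ ≤ ((A.toFinset.erase q).card : ℝ) := by
            norm_cast
            apply Finset.card_le_card
            intro p hp
            rw [Finset.mem_filter, Set.mem_toFinset] at hp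
            rw [Finset.mem_erase, Set.mem_toFinset]
            refine ⟨?_, hSA p hp.1 hp.2⟩
            rintro rfl
            exact hqS hp.1
        _ = N - 1 := by
            rw [Finset.card_erase_of_mem (Set.mem_toFinset.2 hqA), hcard, Nat.cast_pred hNpos]
    rw [hval]
    have h2 : (1 + δ) * ((N : ℝ)⁻¹ * ∑ p ∈ S.toFinset, lam (stdVec p.2 - stdVec p.1))
        ≤ (1 + δ) * ((N : ℝ)⁻¹ * (N - 1)) := by
      gcongr
    refine lt_of_le_of_lt h2 ?_
    have h3 : (1 + δ) * ((N : ℝ)⁻¹ * (N - 1)) = ((1 + δ) * (N - 1)) / N := by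
      field_simp
    rw [h3, div_lt_one hNR]
    nlinarith

end SEP
end
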